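/- Let Σ = {a,b,c} and let A be the architecture with Procs = {p1,p2}, Stacks = Bags = ∅, DS = Queues = {c1,c2}, Writer(c1) = Reader(c2) = p1 and Writer(c2) = Reader(c1) = p2. There exists an MSO(A,Σ) sentence φ such that for every CPDS S over (A,Σ), L(S) ≠ L(φ). -/

import Mathlib

/-! ### Architectures and concurrent behaviors with matching (CBMs) -/

/-- The three kinds of data structures. -/
inductive DSKind : Type
  | stack
  | queue
  | bag
deriving DecidableEq

/-- An architecture: a finite set of processes, a finite set of data structures
(each a stack, queue, or bag), with writer and reader processes; stacks are
written and read by the same process. -/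
structure Architecture where
  Procs : Type
  DS : Type
  procsFintype : Fintype Procs
  dsFintype : Fintype DS
  procsDecEq : DecidableEq Procs
  dsDecEq : DecidableEq DS
  kind : DS → DSKind
  Writer : DS → Procs
  Reader : DS → Procs
  stack_wr : ∀ d, kind d = DSKind.stack → Writer d = Reader d

attribute [instance] Architecture.procsFintype Architecture.dsFintype
  Architecture.procsDecEq Architecture.dsDecEq

/-- Potential events: a process together with a (1-based) position. -/
abbrev Architecture.Event (A : Architecture) : Type := A.Procs × ℕ

/-- The data of a CBM: one word per process and one matching relation per
data structure (on potential events). -/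
structure PreCBM (A : Architecture) (Alph : Type) where
  word : A.Procs → List Alph
  mrel : A.DS → A.Event → A.Event → Prop

namespace PreCBM

variable {A : Architecture} {Alph : Type}

/-- `(p,i)` is an event iff `1 ≤ i ≤ |w_p|`. -/
def isEvent (M : PreCBM A Alph) (e : A.Event) : Prop :=
  1 ≤ e.2 ∧ e.2 ≤ (M.word e.1).length

/-- The set of events of `M`. -/
def events (M : PreCBM A Alph) : Set A.Event := {e | M.isEvent e}

/-- The label of event `(p,i)` is the `i`-th letter of `w_p`. -/
def label (M : PreCBM A Alph) (e : A.Event) : Option Alph :=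
  (M.word e.1)[e.2 - 1]?

/-- Process-successor relation `(p,i) → (p,i+1)`. -/
def procSucc (M : PreCBM A Alph) (e f : A.Event) : Prop :=
  M.isEvent e ∧ M.isEvent f ∧ f.1 = e.1 ∧ f.2 = e.2 + 1

/-- `e ▷ f` for some data structure. -/
def mat (M : PreCBM A Alph) (e f : A.Event) : Prop := ∃ d, M.mrel d e f

def step (M : PreCBM A Alph) (e f : A.Event) : Prop := M.procSucc e f ∨ M.mat e f

/-- The causal order `< = (→ ∪ ▷)⁺`. -/
def lt (M : PreCBM A Alph) : A.Event → A.Event → Prop := Relation.TransGen M.step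

/-- An event is internal if it is not the endpoint of any matching edge. -/
def isInternal (M : PreCBM A Alph) (e : A.Event) : Prop :=
  ¬ ∃ d f, M.mrel d e f ∨ M.mrel d f e

/-- The CBM axioms. -/
structure IsCBM (M : PreCBM A Alph) : Prop where
  mrel_valid : ∀ d e f, M.mrel d e f →
    M.isEvent e ∧ M.isEvent f ∧ e.1 = A.Writer d ∧ f.1 = A.Reader d
  disjoint : ∀ d d' e f e' f', M.mrel d e f → M.mrel d' e' f' →
    ¬ (d = d' ∧ e = e' ∧ f = f') → e ≠ e' ∧ e ≠ f' ∧ f ≠ e' ∧ f ≠ f'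
  irrefl : ∀ e, ¬ M.lt e e
  lifo : ∀ d, A.kind d = DSKind.stack → ∀ e₁ f₁ e₂ f₂,
    M.mrel d e₁ f₁ → M.mrel d e₂ f₂ → M.lt e₁ e₂ → M.lt e₂ f₁ → M.lt f₂ f₁
  fifo : ∀ d, A.kind d = DSKind.queue → ∀ e₁ f₁ e₂ f₂,
    M.mrel d e₁ f₁ → M.mrel d e₂ f₂ → M.lt e₁ e₂ → M.lt f₁ f₂

end PreCBM

/-- Concurrent behaviors with matching over `(A, Alph)`. -/
def CBM (A : Architecture) (Alph : Type) : Type := {M : PreCBM A Alph // M.IsCBM}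
/-! ### Systems of concurrent processes with data structures (CPDS) -/

/-- A CPDS over an architecture `A` and alphabet `Alph`. -/
structure CPDS (A : Architecture) (Alph : Type) where
  Locs : Type
  Val : Type
  locsFintype : Fintype Locs
  valFintype : Fintype Val
  locsNonempty : Nonempty Locs
  valNonempty : Nonempty Val
  internal : A.Procs → Locs → Alph → Locs → Prop
  write : A.Procs → Locs → Alph → A.DS → Val → Locs → Prop
  read : A.Procs → Locs → Alph → A.DS → Val → Locs → Prop
  write_writer : ∀ p ℓ a d v ℓ', write p ℓ a d v ℓ' → A.Writer d = p
  read_reader : ∀ p ℓ a d v ℓ', read p ℓ a d v ℓ' → A.Reader d = p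
  init : Locs
  finals : Set (A.Procs → Locs)

namespace CPDS

variable {A : Architecture} {Alph : Type}

/-- `ρ⁻(e)`: location before event `e` (`init` if `e` is minimal on its process). -/
def prevLoc (S : CPDS A Alph) (ρ : A.Event → S.Locs) (e : A.Event) : S.Locs :=
  if e.2 ≤ 1 then S.init else ρ (e.1, e.2 - 1)

/-- `ρ` is a run of `S` on `M` (graph semantics). -/
def IsRun (S : CPDS A Alph) (M : PreCBM A Alph) (ρ : A.Event → S.Locs) : Prop :=
  (∀ e, M.isEvent e → M.isInternal e →
    ∃ a, M.label e = some a ∧ S.internal e.1 (S.prevLoc ρ e) a (ρ e)) ∧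
  (∀ d e f, M.mrel d e f → ∃ v a b,
    M.label e = some a ∧ M.label f = some b ∧
    S.write e.1 (S.prevLoc ρ e) a d v (ρ e) ∧
    S.read f.1 (S.prevLoc ρ f) b d v (ρ f))

/-- Location of the last event of process `p` (`init` if it has no event). -/
def lastLoc (S : CPDS A Alph) (M : PreCBM A Alph) (ρ : A.Event → S.Locs)
    (p : A.Procs) : S.Locs :=
  if (M.word p).length = 0 then S.init else ρ (p, (M.word p).length)

/-- `S` accepts `M`: some run reaching a global final location tuple. -/
def AcceptsPre (S : CPDS A Alph) (M : PreCBM A Alph) : Prop :=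
  ∃ ρ : A.Event → S.Locs, S.IsRun M ρ ∧ (fun p => S.lastLoc M ρ p) ∈ S.finals

/-- The graph-semantics language `L(S) ⊆ CBM(A,Alph)`. -/
def lang (S : CPDS A Alph) : Set (CBM A Alph) := {M | S.AcceptsPre M.1}

end CPDS
/-! ### Monadic second-order logic over vertex- and edge-labeled structures -/

/-- MSO formulas over structures with vertex labels `Vl` and binary relations
indexed by `El`.  First-order variables and set variables are indexed by `ℕ`. -/
inductive GMSO (Vl El : Type) : Type
  | lab (a : Vl) (x : ℕ)
  | edge (γ : El) (x y : ℕ)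
  | eq (x y : ℕ)
  | mem (x X : ℕ)
  | or (φ ψ : GMSO Vl El)
  | not (φ : GMSO Vl El)
  | exFO (x : ℕ) (φ : GMSO Vl El)
  | exSO (X : ℕ) (φ : GMSO Vl El)

namespace GMSO

variable {Vl El : Type} {V : Type}

/-- Satisfaction of an MSO formula in a structure with domain `dom`, labeling
relation `lab` and edge relations `edge`, under valuations `ν` (first-order,
partial) and `μ` (second-order). -/
def Sat (dom : Set V) (lab : V → Vl → Prop) (edge : El → V → V → Prop) :
    (ℕ → Option V) → (ℕ → Set V) → GMSO Vl El → Prop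
  | ν, _, .lab a x => ∃ v, ν x = some v ∧ v ∈ dom ∧ lab v a
  | ν, _, .edge γ x y => ∃ u v, ν x = some u ∧ ν y = some v ∧ edge γ u v
  | ν, _, .eq x y => ∃ v, ν x = some v ∧ ν y = some v
  | ν, μ, .mem x X => ∃ v, ν x = some v ∧ v ∈ μ X
  | ν, μ, .or φ ψ => Sat dom lab edge ν μ φ ∨ Sat dom lab edge ν μ ψ
  | ν, μ, .not φ => ¬ Sat dom lab edge ν μ φ
  | ν, μ, .exFO x φ => ∃ v ∈ dom, Sat dom lab edge (Function.update ν x (some v)) μ φ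
  | ν, μ, .exSO X φ => ∃ E : Set V, E ⊆ dom ∧ Sat dom lab edge ν (Function.update μ X E) φ

/-- Free first-order variables. -/
def freeFO : GMSO Vl El → Set ℕ
  | .lab _ x => {x}
  | .edge _ x y => {x, y}
  | .eq x y => {x, y}
  | .mem x _ => {x}
  | .or φ ψ => freeFO φ ∪ freeFO ψ
  | .not φ => freeFO φ
  | .exFO x φ => freeFO φ \ {x}
  | .exSO _ φ => freeFO φ

/-- Free second-order variables. -/
def freeSO : GMSO Vl El → Set ℕ
  | .lab _ _ => ∅
  | .edge _ _ _ => ∅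
  | .eq _ _ => ∅
  | .mem _ X => {X}
  | .or φ ψ => freeSO φ ∪ freeSO ψ
  | .not φ => freeSO φ
  | .exFO _ φ => freeSO φ
  | .exSO X φ => freeSO φ \ {X}

/-- A sentence is a formula without free variables. -/
def Closed (φ : GMSO Vl El) : Prop := freeFO φ = ∅ ∧ freeSO φ = ∅

/-- Satisfaction of a sentence (valuations are irrelevant for sentences). -/
def Models (dom : Set V) (lab : V → Vl → Prop) (edge : El → V → V → Prop)
    (φ : GMSO Vl El) : Prop :=
  Sat dom lab edge (fun _ => none) (fun _ => ∅) φ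

/-- First-order formulas: no second-order quantification. -/
def FirstOrder : GMSO Vl El → Prop
  | .or φ ψ => FirstOrder φ ∧ FirstOrder ψ
  | .not φ => FirstOrder φ
  | .exFO _ φ => FirstOrder φ
  | .exSO _ _ => False
  | _ => True

/-- EMSO formulas: a block of existential second-order quantifiers followed by a
first-order formula. -/
inductive IsEMSO : GMSO Vl El → Prop
  | fo {φ : GMSO Vl El} : FirstOrder φ → IsEMSO φ
  | ex {X : ℕ} {φ : GMSO Vl El} : IsEMSO φ → IsEMSO (.exSO X φ)

end GMSO
/-! ### MSO over CBMs -/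

namespace PreCBM

variable {A : Architecture} {Alph : Type}

/-- Vertex-label relation of a CBM: `a(x)` (letter) and `p(x)` (process). -/
def gmsoLab (M : PreCBM A Alph) (e : A.Event) : Alph ⊕ A.Procs → Prop := fun q =>
  match q with
  | Sum.inl a => M.label e = some a
  | Sum.inr p => e.1 = p

/-- Edge relations of a CBM: `x → y` (`none`) and `x ▷^d y` (`some d`). -/
def gmsoEdge (M : PreCBM A Alph) : Option A.DS → A.Event → A.Event → Prop := fun γ e f =>
  match γ with
  | none => M.procSucc e f
  | some d => M.mrel d e f

/-- Satisfaction of an `MSO(A,Alph)` sentence in the CBM `M`. -/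
def MsoSat (M : PreCBM A Alph) (φ : GMSO (Alph ⊕ A.Procs) (Option A.DS)) : Prop :=
  GMSO.Models M.events M.gmsoLab M.gmsoEdge φ

end PreCBM

/-- `L(φ) = {M ∈ CBM(A,Alph) | M ⊨ φ}`. -/
def msoLang (A : Architecture) (Alph : Type)
    (φ : GMSO (Alph ⊕ A.Procs) (Option A.DS)) : Set (CBM A Alph) :=
  {M | M.1.MsoSat φ}
/-! ### The two-process, two-queue architecture -/

/-- The architecture with processes `p1 = false`, `p2 = true`, queues
`c1 = false` (from `p1` to `p2`) and `c2 = true` (from `p2` to `p1`). -/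
def archQQ : Architecture where
  Procs := Bool
  DS := Bool
  procsFintype := inferInstance
  dsFintype := inferInstance
  procsDecEq := inferInstance
  dsDecEq := inferInstance
  kind := fun _ => DSKind.queue
  Writer := fun d => d
  Reader := fun d => !d
  stack_wr := fun _ h => DSKind.noConfusion h

/-!
In a staircase of width `n`, there are two kinds of round trips from the first process to the
second one and back: they advance by `2 * n` and by `2 * (n + 1)` positions. Reachability by round
trips of one kind is expressible in MSO, and positions related by both kinds are congruent modulo
`2 * (n * (n + 1))`. Hence the sentence saying that no `b`-event is reachable from an `a`-event by
both kinds of round trips holds in all staircases whose labeling has this period, and fails if some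
position of the first half and the corresponding position of the second half carry `a` and `b`.

A CPDS transports across the middle of a staircase only the locations of the two processes and the
values of the `n` messages in transit, which is too little to remember one of the
`2 ^ (n * (n + 1))` labelings. So two accepted staircases with distinct periodic labelings can be
spliced in the middle, in either order, and one of the two results violates the sentence.
-/

namespace GMSO

variable {Vl El V : Type}

/-- Conjunction, expressed by `or` and `not`. -/
protected def and (φ ψ : GMSO Vl El) : GMSO Vl El := .not (.or (.not φ) (.not ψ))

/-- `PathRel dom edge γs u v`: a path from `u` to `v` reads the edge labels `γs` and visits,
after `u`, only elements of `dom`. -/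
def PathRel (dom : Set V) (edge : El → V → V → Prop) : List El → V → V → Prop
  | [], u, v => u = v
  | γ :: γs, u, v => ∃ w ∈ dom, edge γ u w ∧ PathRel dom edge γs w v

/-- The formula saying that a path labeled `γs` leads from variable `x` to variable `y`. The
intermediate elements are bound to the variables `x + 1, x + 2, …`, so it has this meaning only
for `y < x`. -/
def path : List El → ℕ → ℕ → GMSO Vl El
  | [], x, y => .eq x y
  | γ :: γs, x, y => .exFO (x + 1) ((edge γ x (x + 1)).and (path γs (x + 1) y))

/-- The formula saying that variable `1` is reachable from variable `0` by repeating paths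
labeled `γs`: no set containing `0` and closed under such paths omits `1`. -/
def reach (γs : List El) : GMSO Vl El :=
  .not (.exSO 0 ((mem 0 0).and ((GMSO.not (mem 1 0)).and
    (.not (.exFO 2 (.exFO 3 ((mem 3 0).and ((GMSO.not (mem 2 0)).and (path γs 3 2)))))))))

/-- The sentence saying that no `b`-labeled element is reachable from an `a`-labeled element both
by repeating `γs` and by repeating `δs`. -/
def noCommonReach (a b : Vl) (γs δs : List El) : GMSO Vl El :=
  .not (.exFO 0 (.exFO 1 ((lab a 0).and ((lab b 1).and ((reach γs).and (reach δs))))))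

theorem freeFO_and (φ ψ : GMSO Vl El) : (φ.and ψ).freeFO = φ.freeFO ∪ ψ.freeFO := rfl

theorem freeSO_and (φ ψ : GMSO Vl El) : (φ.and ψ).freeSO = φ.freeSO ∪ ψ.freeSO := rfl

theorem freeFO_path_subset (γs : List El) (x y : ℕ) :
    (path γs x y : GMSO Vl El).freeFO ⊆ {x, y} := by
  induction γs generalizing x with
  | nil => exact subset_rfl
  | cons γ γs ih =>
    intro z hz
    have hrec := @ih (x + 1) z
    simp only [path, freeFO, freeFO_and, Set.mem_sdiff, Set.mem_union, Set.mem_insert_iff,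
      Set.mem_singleton_iff] at hz hrec ⊢
    tauto

theorem freeSO_path (γs : List El) (x y : ℕ) : (path γs x y : GMSO Vl El).freeSO = ∅ := by
  induction γs generalizing x with
  | nil => rfl
  | cons γ γs ih => simp only [path, freeSO, freeSO_and, ih, Set.union_empty]

theorem freeFO_reach_subset (γs : List El) : (reach γs : GMSO Vl El).freeFO ⊆ {0, 1} := by
  intro z hz
  have hpath := @freeFO_path_subset Vl El γs 3 2 z
  simp only [reach, freeFO, freeFO_and, Set.mem_sdiff, Set.mem_union, Set.mem_insert_iff,
    Set.mem_singleton_iff] at hz hpath ⊢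
  tauto

theorem freeSO_reach (γs : List El) : (reach γs : GMSO Vl El).freeSO = ∅ := by
  simp [reach, freeSO, freeSO_and, freeSO_path]

theorem closed_noCommonReach (a b : Vl) (γs δs : List El) :
    (noCommonReach a b γs δs).Closed := by
  refine ⟨Set.eq_empty_of_forall_notMem fun z hz => ?_, ?_⟩
  · have hγ := @freeFO_reach_subset Vl El γs z
    have hδ := @freeFO_reach_subset Vl El δs z
    simp only [noCommonReach, freeFO, freeFO_and, Set.mem_sdiff, Set.mem_union,
      Set.mem_insert_iff, Set.mem_singleton_iff] at hz hγ hδ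
    tauto
  · simp only [noCommonReach, freeSO, freeSO_and, freeSO_reach, Set.union_empty]

theorem reflTransGen_iff_forall_closed {dom : Set V} {r : V → V → Prop}
    (hr : ∀ u v, u ∈ dom → r u v → v ∈ dom) {x y : V} (hx : x ∈ dom) :
    Relation.ReflTransGen r x y ↔
      ∀ X ⊆ dom, x ∈ X → (∀ u ∈ X, ∀ v ∈ dom, r u v → v ∈ X) → y ∈ X := by
  constructor
  · intro hxy X hX hxX hclosed
    induction hxy with
    | refl => exact hxX
    | tail _ huv hu => exact hclosed _ hu _ (hr _ _ (hX hu) huv) huv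
  · intro h
    exact (h {z | z ∈ dom ∧ Relation.ReflTransGen r x z} (fun _ hz => hz.1) ⟨hx, .refl⟩
      fun _ hu v hv huv => ⟨hv, hu.2.tail huv⟩).2

theorem PathRel.mem_of_mem {dom : Set V} {edge : El → V → V → Prop} {γs : List El} {u v : V}
    (h : PathRel dom edge γs u v) (hu : u ∈ dom) : v ∈ dom := by
  induction γs generalizing u with
  | nil => exact h ▸ hu
  | cons γ γs ih =>
    obtain ⟨w, hw, -, hwv⟩ := h
    exact ih hwv hw

section Sat

variable {dom : Set V} {lab : V → Vl → Prop} {edge : El → V → V → Prop}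
  {ν : ℕ → Option V} {μ : ℕ → Set V}

theorem sat_and {φ ψ : GMSO Vl El} :
    Sat dom lab edge ν μ (φ.and ψ) ↔ Sat dom lab edge ν μ φ ∧ Sat dom lab edge ν μ ψ := by
  simp only [GMSO.and, Sat, not_or, not_not]

theorem sat_path (γs : List El) {x y : ℕ} (hyx : y < x) {u v : V}
    (hx : ν x = some u) (hy : ν y = some v) :
    Sat dom lab edge ν μ (path γs x y) ↔ PathRel dom edge γs u v := by
  induction γs generalizing x ν u with
  | nil => simp [path, Sat, PathRel, hx, hy, eq_comm]
  | cons γ γs ih =>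
    have hrec (w : V) : Sat dom lab edge (Function.update ν (x + 1) (some w)) μ
        (path γs (x + 1) y) ↔ PathRel dom edge γs w v :=
      ih (by omega) (Function.update_self ..)
        ((Function.update_of_ne (by omega) ..).trans hy)
    simp [path, Sat, sat_and, hrec, PathRel, hx]

theorem sat_reach (γs : List El) {x y : V} (hxdom : x ∈ dom)
    (hx : ν 0 = some x) (hy : ν 1 = some y) :
    Sat dom lab edge ν μ (reach γs) ↔ Relation.ReflTransGen (PathRel dom edge γs) x y := by
  have hpath (μ : ℕ → Set V) (u v : V) : Sat dom lab edge
      (Function.update (Function.update ν 2 (some v)) 3 (some u)) μ (path γs 3 2) ↔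
        PathRel dom edge γs u v :=
    sat_path γs (by norm_num) (by simp) (by simp)
  have hclosed : Sat dom lab edge ν μ (reach γs) ↔ ∀ X ⊆ dom, x ∈ X →
      (∀ u ∈ X, ∀ v ∈ dom, PathRel dom edge γs u v → v ∈ X) → y ∈ X := by
    simp only [reach, Sat, sat_and, hpath]
    simp only [hx, hy, Option.some.injEq, Function.update_self, exists_eq_left', ne_eq,
      Nat.reduceEqDiff, not_false_eq_true, Function.update_of_ne, not_exists, not_and, not_forall,
      not_not]
    grind
  rw [hclosed, reflTransGen_iff_forall_closed (fun u v hu huv => huv.mem_of_mem hu) hxdom]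

theorem models_noCommonReach (a b : Vl) (γs δs : List El) :
    Models dom lab edge (noCommonReach a b γs δs) ↔
      ∀ x ∈ dom, ∀ y ∈ dom, lab x a → lab y b →
        Relation.ReflTransGen (PathRel dom edge γs) x y →
        ¬ Relation.ReflTransGen (PathRel dom edge δs) x y := by
  have hreach (γs : List El) (ν : ℕ → Option V) (x : V) (hx : x ∈ dom) (y : V) :
      Sat dom lab edge (Function.update (Function.update ν 0 (some x)) 1 (some y)) (fun _ => ∅)
        (reach γs) ↔ Relation.ReflTransGen (PathRel dom edge γs) x y :=
    sat_reach γs hx (by simp) (by simp)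
  simp only [Models, noCommonReach, Sat, sat_and]
  simp +contextual [hreach]

end Sat

end GMSO

namespace PreCBM

variable {A : Architecture} {Alph : Type} {M : PreCBM A Alph}

theorem lt_of_forall_step_lt {β : Type*} [Preorder β] {rank : A.Event → β}
    (hrank : ∀ e f, M.step e f → rank e < rank f) {e f : A.Event} (h : M.lt e f) :
    rank e < rank f := by
  induction h with
  | single h => exact hrank _ _ h
  | tail _ h ih => exact ih.trans (hrank _ _ h)

theorem isEvent_iff {L : ℕ} (hL : ∀ p, (M.word p).length = L) {e : A.Event} :
    M.isEvent e ↔ 0 < e.2 ∧ e.2 ≤ L := by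
  rw [isEvent, hL, Nat.succ_le_iff]

theorem lt_of_index_lt {p : A.Procs} {i j : ℕ} (hi : 0 < i) (hij : i < j)
    (hj : j ≤ (M.word p).length) : M.lt (p, i) (p, j) := by
  induction j, hij using Nat.le_induction with
  | base => exact .single (.inl ⟨⟨hi, by grind⟩, ⟨by grind, hj⟩, rfl, rfl⟩)
  | succ k hk ih =>
    exact (ih (by omega)).tail (.inl ⟨⟨by grind, by grind⟩, ⟨by grind, hj⟩, rfl, rfl⟩)

/-- Paths of a CBM, with process-successor edges labeled `none`. -/
abbrev PathRel (M : PreCBM A Alph) : List (Option A.DS) → A.Event → A.Event → Prop :=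
  GMSO.PathRel M.events M.gmsoEdge

theorem pathRel_replicate_none (k : ℕ) {e f : A.Event} (he : M.isEvent e) :
    M.PathRel (List.replicate k none) e f ↔ f = (e.1, e.2 + k) ∧ M.isEvent f := by
  induction k generalizing e with
  | zero =>
    simp only [List.replicate_zero, GMSO.PathRel, add_zero]
    grind
  | succ k ih =>
    simp only [List.replicate_succ, GMSO.PathRel]
    constructor
    · rintro ⟨g, hg, ⟨-, -, hproc, hindex⟩, hgf⟩
      have hf := (ih hg).1 hgf
      grind
    · rintro ⟨rfl, hf⟩
      have hnext : M.isEvent (e.1, e.2 + 1) := ⟨by grind, by grind [isEvent]⟩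
      exact ⟨_, hnext, ⟨he, hnext, rfl, rfl⟩, (ih hnext).2 ⟨by grind, hf⟩⟩

end PreCBM

namespace CPDS

variable {A : Architecture} {Alph : Type} {S : CPDS A Alph}

/-- An accepting run together with the values carried by the matching edges. -/
structure IsAcceptingRun (S : CPDS A Alph) (M : PreCBM A Alph) (ρ : A.Event → S.Locs)
    (val : A.DS → A.Event → A.Event → S.Val) : Prop where
  internal : ∀ e, M.isEvent e → M.isInternal e →
    ∃ a, M.label e = some a ∧ S.internal e.1 (S.prevLoc ρ e) a (ρ e)
  write : ∀ d e f, M.mrel d e f →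
    ∃ a, M.label e = some a ∧ S.write e.1 (S.prevLoc ρ e) a d (val d e f) (ρ e)
  read : ∀ d e f, M.mrel d e f →
    ∃ b, M.label f = some b ∧ S.read f.1 (S.prevLoc ρ f) b d (val d e f) (ρ f)
  final : (fun p => S.lastLoc M ρ p) ∈ S.finals

theorem AcceptsPre.exists_isAcceptingRun {M : PreCBM A Alph} (h : S.AcceptsPre M) :
    ∃ ρ val, S.IsAcceptingRun M ρ val := by
  obtain ⟨ρ, ⟨hinternal, hedge⟩, hfinal⟩ := h
  have := S.valNonempty
  choose! val a b ha hb hwrite hread using hedge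
  exact ⟨ρ, val, hinternal, fun d e f h => ⟨_, ha d e f h, hwrite d e f h⟩,
    fun d e f h => ⟨_, hb d e f h, hread d e f h⟩, hfinal⟩

theorem IsAcceptingRun.acceptsPre {M : PreCBM A Alph} {ρ : A.Event → S.Locs}
    {val : A.DS → A.Event → A.Event → S.Val} (h : S.IsAcceptingRun M ρ val) :
    S.AcceptsPre M := by
  refine ⟨ρ, ⟨h.internal, fun d e f hef => ?_⟩, h.final⟩
  obtain ⟨a, ha, hwrite⟩ := h.write d e f hef
  obtain ⟨b, hb, hread⟩ := h.read d e f hef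
  exact ⟨_, a, b, ha, hb, hwrite, hread⟩

/-- The words that follow `w` up to the cut `c` (the first `c p` letters of each process `p`)
and `w'` after it. -/
def spliceWord (c : A.Procs → ℕ) (w w' : A.Procs → List Alph) (p : A.Procs) : List Alph :=
  (w p).take (c p) ++ (w' p).drop (c p)

/-- The location assignment that follows `ρ` up to the cut `c` and `ρ'` after it. -/
def spliceRun {Locs : Type} (c : A.Procs → ℕ) (ρ ρ' : A.Event → Locs) (e : A.Event) : Locs :=
  if e.2 ≤ c e.1 then ρ e else ρ' e

variable {c : A.Procs → ℕ} {w w' : A.Procs → List Alph} {ρ ρ' : A.Event → S.Locs}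
  {R : A.DS → A.Event → A.Event → Prop}

theorem length_spliceWord (hlen : ∀ p, (w p).length = (w' p).length) (p : A.Procs) :
    (spliceWord c w w' p).length = (w' p).length := by
  simp only [spliceWord, List.length_append, List.length_take, List.length_drop, hlen]
  omega

theorem label_spliceWord_of_le (hc : ∀ p, c p ≤ (w p).length) {e : A.Event} (hpos : 0 < e.2)
    (he : e.2 ≤ c e.1) :
    (PreCBM.mk (spliceWord c w w') R).label e = (PreCBM.mk w R).label e := by
  have hlen := hc e.1
  simp only [PreCBM.label, spliceWord]
  grind

theorem label_spliceWord_of_lt (hc : ∀ p, c p ≤ (w p).length) {e : A.Event} (he : c e.1 < e.2) :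
    (PreCBM.mk (spliceWord c w w') R).label e = (PreCBM.mk w' R).label e := by
  have hlen := hc e.1
  simp only [PreCBM.label, spliceWord]
  grind

theorem spliceRun_of_le {e : A.Event} (he : e.2 ≤ c e.1) : spliceRun c ρ ρ' e = ρ e :=
  if_pos he

theorem spliceRun_of_lt {e : A.Event} (he : c e.1 < e.2) : spliceRun c ρ ρ' e = ρ' e :=
  if_neg he.not_ge

theorem prevLoc_spliceRun_of_le {e : A.Event} (he : e.2 ≤ c e.1) :
    S.prevLoc (spliceRun c ρ ρ') e = S.prevLoc ρ e := by
  unfold prevLoc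
  split_ifs
  · rfl
  · exact spliceRun_of_le (by grind)

theorem spliceRun_of_ge (hρ : ∀ p, ρ (p, c p) = ρ' (p, c p)) {e : A.Event} (he : c e.1 ≤ e.2) :
    spliceRun c ρ ρ' e = ρ' e := by
  obtain he | he := he.eq_or_lt
  · rw [spliceRun_of_le he.ge]
    simpa only [he] using hρ e.1
  · exact spliceRun_of_lt he

theorem prevLoc_spliceRun_of_lt (hρ : ∀ p, ρ (p, c p) = ρ' (p, c p)) {e : A.Event}
    (he : c e.1 < e.2) : S.prevLoc (spliceRun c ρ ρ') e = S.prevLoc ρ' e := by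
  unfold prevLoc
  split_ifs
  · rfl
  · exact spliceRun_of_ge hρ (by grind)

theorem lastLoc_spliceRun (hlen : ∀ p, (w p).length = (w' p).length)
    (hc : ∀ p, c p ≤ (w p).length) (hρ : ∀ p, ρ (p, c p) = ρ' (p, c p)) (p : A.Procs) :
    S.lastLoc ⟨spliceWord c w w', R⟩ (spliceRun c ρ ρ') p = S.lastLoc ⟨w', R⟩ ρ' p := by
  simp only [lastLoc, length_spliceWord hlen]
  split_ifs
  · rfl
  · exact spliceRun_of_ge hρ ((hc p).trans_eq (hlen p))

theorem IsAcceptingRun.splice {val val' : A.DS → A.Event → A.Event → S.Val}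
    (hrun : S.IsAcceptingRun ⟨w, R⟩ ρ val) (hrun' : S.IsAcceptingRun ⟨w', R⟩ ρ' val')
    (hlen : ∀ p, (w p).length = (w' p).length) (hc : ∀ p, c p ≤ (w p).length)
    (hpos : ∀ d e f, R d e f → 0 < e.2 ∧ 0 < f.2)
    (hforward : ∀ d e f, R d e f → f.2 ≤ c f.1 → e.2 ≤ c e.1)
    (hρ : ∀ p, ρ (p, c p) = ρ' (p, c p))
    (hval : ∀ d e f, R d e f → e.2 ≤ c e.1 → c f.1 < f.2 → val d e f = val' d e f) :
    S.IsAcceptingRun ⟨spliceWord c w w', R⟩ (spliceRun c ρ ρ')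
      (fun d e f => if e.2 ≤ c e.1 then val d e f else val' d e f) where
  internal e hevent hinternal := by
    rcases le_or_gt e.2 (c e.1) with he | he
    · rw [label_spliceWord_of_le hc hevent.1 he, prevLoc_spliceRun_of_le he, spliceRun_of_le he]
      exact hrun.internal e ⟨hevent.1, he.trans (hc _)⟩ hinternal
    · rw [label_spliceWord_of_lt hc he, prevLoc_spliceRun_of_lt hρ he, spliceRun_of_lt he]
      exact hrun'.internal e
        ⟨hevent.1, hevent.2.trans_eq (length_spliceWord hlen _)⟩ hinternal
  write d e f hef := by
    rcases le_or_gt e.2 (c e.1) with he | he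
    · rw [label_spliceWord_of_le hc (hpos d e f hef).1 he, prevLoc_spliceRun_of_le he,
        spliceRun_of_le he, if_pos he]
      exact hrun.write d e f hef
    · rw [label_spliceWord_of_lt hc he, prevLoc_spliceRun_of_lt hρ he, spliceRun_of_lt he,
        if_neg he.not_ge]
      exact hrun'.write d e f hef
  read d e f hef := by
    rcases le_or_gt f.2 (c f.1) with hf | hf
    · rw [label_spliceWord_of_le hc (hpos d e f hef).2 hf, prevLoc_spliceRun_of_le hf,
        spliceRun_of_le hf, if_pos (hforward d e f hef hf)]
      exact hrun.read d e f hef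
    · have hread : (if e.2 ≤ c e.1 then val d e f else val' d e f) = val' d e f :=
        ite_eq_right_iff.2 fun he => hval d e f hef he hf
      rw [label_spliceWord_of_lt hc hf, prevLoc_spliceRun_of_lt hρ hf, spliceRun_of_lt hf, hread]
      exact hrun'.read d e f hef
  final := by
    simpa only [lastLoc_spliceRun hlen hc hρ] using hrun'.final

/-- The state of a run at a cut consists of the locations reached there and of the values on the
edges crossing it, so two of too many accepted behaviors can be exchanged after the cut. -/
theorem exists_ne_acceptsPre_spliceWord {ι : Type*} {w : ι → A.Procs → List Alph}
    {len : A.Procs → ℕ} (K : Finset (A.DS × A.Event × A.Event))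
    (hacc : ∀ u, S.AcceptsPre ⟨w u, R⟩)
    (hlen : ∀ u p, (w u p).length = len p) (hc : ∀ p, c p ≤ len p)
    (hpos : ∀ d e f, R d e f → 0 < e.2 ∧ 0 < f.2)
    (hforward : ∀ d e f, R d e f → f.2 ≤ c f.1 → e.2 ≤ c e.1)
    (hK : ∀ d e f, R d e f → e.2 ≤ c e.1 → c f.1 < f.2 → (d, e, f) ∈ K)
    (hcard : Nat.card S.Locs ^ Nat.card A.Procs * Nat.card S.Val ^ K.card < Nat.card ι) :
    ∃ u v, u ≠ v ∧ S.AcceptsPre ⟨spliceWord c (w u) (w v), R⟩ ∧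
      S.AcceptsPre ⟨spliceWord c (w v) (w u), R⟩ := by
  have := S.locsFintype
  have := S.valFintype
  choose ρ val hrun using fun u => (hacc u).exists_isAcceptingRun
  let stateAtCut (u : ι) : (A.Procs → S.Locs) × (K → S.Val) :=
    (fun p => ρ u (p, c p), fun t => val u t.1.1 t.1.2.1 t.1.2.2)
  have hnotinj : ¬ Function.Injective stateAtCut := fun hinj =>
    hcard.not_ge <| by
      simpa [Nat.card_prod, Nat.card_fun] using Nat.card_le_card_of_injective _ hinj
  have hsplice (u v : ι) (huv : stateAtCut u = stateAtCut v) :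
      S.AcceptsPre ⟨spliceWord c (w u) (w v), R⟩ := by
    obtain ⟨hloc, hval⟩ := Prod.ext_iff.1 huv
    exact ((hrun u).splice (hrun v) (fun p => (hlen u p).trans (hlen v p).symm)
      (fun p => (hc p).trans_eq (hlen u p).symm) hpos hforward (congrFun hloc)
      fun d e f hef he hf => congrFun hval ⟨(d, e, f), hK d e f hef he hf⟩).acceptsPre
  obtain ⟨u, v, huv, hne⟩ := Function.not_injective_iff.1 hnotinj
  exact ⟨u, v, hne, hsplice u v huv, hsplice v u huv.symm⟩

end CPDS

/-- Matching edges of the staircase of width `n` on `L` events per process: even events write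
and odd events read. The second process reads a message one position below the one at which the
first process writes it, the first process reads a message `2 * n - 1` positions above the one at
which the second process writes it. -/
inductive StaircaseEdge (n L : ℕ) : archQQ.DS → archQQ.Event → archQQ.Event → Prop
  | request (i : ℕ) (h : 2 * i + 2 ≤ L) :
    StaircaseEdge n L false (false, 2 * i + 2) (true, 2 * i + 1)
  | response (i : ℕ) (h : 2 * i + 2 * n + 1 ≤ L) :
    StaircaseEdge n L true (true, 2 * i + 2) (false, 2 * i + 2 * n + 1)

/-- The staircase of width `n` with words `w`, which are meant to have length `L`. -/
abbrev staircase {Alph : Type} (n L : ℕ) (w : archQQ.Procs → List Alph) :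
    PreCBM archQQ Alph :=
  ⟨w, StaircaseEdge n L⟩

/-- A numbering of the events compatible with the causal order of every staircase of positive
width. -/
def staircaseRank (e : archQQ.Event) : ℕ := 2 * e.2 + e.2 % 2 + 2 * Bool.toNat e.1

/-- The labels of a round trip through both processes, ending with `2 * k + 1` process
successors. -/
def roundTrip (k : ℕ) : List (Option archQQ.DS) :=
  some false :: none :: some true :: List.replicate (2 * k + 1) none

/-- The word of length `L` in which the positions `2 * i + 1` and `2 * i + 2` carry the letter
`u i`, with `i` taken modulo `P`. -/
def periodicWord {Alph : Type} {P : ℕ} [NeZero P] (L : ℕ) (u : Fin P → Alph) : List Alph :=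
  List.ofFn fun j : Fin L => u (Fin.ofNat P (j / 2))

/-- The sentence forbidding a `b`-event to be reached from an `a`-event both by round trips
of type `0` and by round trips of type `1`. -/
def separatingSentence {Alph : Type} (a b : Alph) :
    GMSO (Alph ⊕ archQQ.Procs) (Option archQQ.DS) :=
  .noCommonReach (.inl a) (.inl b) (roundTrip 0) (roundTrip 1)

section Staircase

variable {Alph : Type} {n L : ℕ} {w : archQQ.Procs → List Alph}

theorem StaircaseEdge.index_pos {d : archQQ.DS} {e f : archQQ.Event}
    (h : StaircaseEdge n L d e f) : 0 < e.2 ∧ 0 < f.2 := by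
  cases h <;> simp

theorem staircaseRank_lt_of_lt [NeZero n] {e f : archQQ.Event} (h : (staircase n L w).lt e f) :
    staircaseRank e < staircaseRank f := by
  have hn := NeZero.pos n
  refine PreCBM.lt_of_forall_step_lt ?_ h
  rintro ⟨p, i⟩ ⟨q, j⟩ (⟨-, -, hproc, hindex⟩ | ⟨d, ⟨i, h⟩ | ⟨i, h⟩⟩)
  · simp only at hproc hindex
    subst hproc hindex
    simp only [staircaseRank]
    omega
  all_goals
    simp only [staircaseRank, Bool.toNat_true, Bool.toNat_false]
    omega

theorem isCBM_staircase [NeZero n] (hw : ∀ p, (w p).length = L) : (staircase n L w).IsCBM where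
  mrel_valid := by
    have hn := NeZero.pos n
    rintro d e f (⟨i, h⟩ | ⟨i, h⟩) <;>
      refine ⟨(PreCBM.isEvent_iff hw).2 ?_, (PreCBM.isEvent_iff hw).2 ?_, rfl, rfl⟩ <;>
      simp only <;> omega
  disjoint := by
    rintro d d' e f e' f' (⟨i, h⟩ | ⟨i, h⟩) (⟨j, h'⟩ | ⟨j, h'⟩) hne <;> grind
  irrefl e h := (staircaseRank_lt_of_lt h).false
  lifo := by rintro d ⟨⟩
  fifo := by
    rintro d - e₁ f₁ e₂ f₂ (⟨i, h⟩ | ⟨i, h⟩) (⟨j, h'⟩ | ⟨j, h'⟩) hlt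
    all_goals
      have hrank := staircaseRank_lt_of_lt hlt
      simp only [staircaseRank] at hrank
      exact PreCBM.lt_of_index_lt (by omega) (by omega) (le_of_le_of_eq (by omega) (hw _).symm)

theorem pathRel_roundTrip_iff (hw : ∀ p, (w p).length = L) (k : ℕ)
    {e f : archQQ.Event} :
    (staircase n L w).PathRel (roundTrip k) e f ↔
      ∃ i, 2 * i + 2 + 2 * (n + k) ≤ L ∧ e = (false, 2 * i + 2) ∧
        f = (false, 2 * i + 2 + 2 * (n + k)) := by
  have hevent {p : archQQ.Procs} {i : ℕ} : (staircase n L w).isEvent (p, i) ↔ 0 < i ∧ i ≤ L :=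
    PreCBM.isEvent_iff hw
  constructor
  · rintro ⟨a, -, ⟨i, -⟩, b, -, ⟨-, -, -, hindex⟩, c, hc, _ | ⟨j, -⟩, hpath⟩
    obtain ⟨rfl, hf⟩ := (PreCBM.pathRel_replicate_none _ hc).1 hpath
    obtain rfl : j = i := by grind
    have hle := (hevent.1 hf).2
    exact ⟨j, by omega, rfl, Prod.ext rfl (by simp only; omega)⟩
  · rintro ⟨i, hi, rfl, rfl⟩
    have hread : (staircase n L w).isEvent ((true, 2 * i + 1) : Bool × ℕ) := hevent.2 (by omega)
    have hwrite : (staircase n L w).isEvent ((true, 2 * i + 2) : Bool × ℕ) := hevent.2 (by omega)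
    have hback : (staircase n L w).isEvent ((false, 2 * i + 2 * n + 1) : Bool × ℕ) :=
      hevent.2 (by omega)
    refine ⟨_, hread, .request i (by omega), _, hwrite, ⟨hread, hwrite, rfl, rfl⟩, _, hback,
      .response i (by omega), (PreCBM.pathRel_replicate_none _ hback).2 ⟨?_, hevent.2 ?_⟩⟩
    · exact Prod.ext rfl (by simp only; omega)
    · omega

theorem modEq_of_reflTransGen_roundTrip (hw : ∀ p, (w p).length = L) {k : ℕ}
    {e f : archQQ.Event}
    (h : Relation.ReflTransGen ((staircase n L w).PathRel (roundTrip k)) e f) :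
    e.2 ≡ f.2 [MOD 2 * (n + k)] := by
  induction h with
  | refl => rfl
  | tail _ hstep ih =>
    obtain ⟨i, -, rfl, rfl⟩ := (pathRel_roundTrip_iff hw k).1 hstep
    exact ih.trans (Nat.ModEq.symm (Nat.add_mod_right _ _))

theorem reflTransGen_roundTrip (hw : ∀ p, (w p).length = L) (k t i : ℕ)
    (h : 2 * i + 2 + 2 * (n + k) * t ≤ L) :
    Relation.ReflTransGen ((staircase n L w).PathRel (roundTrip k))
      (false, 2 * i + 2) (false, 2 * i + 2 + 2 * (n + k) * t) := by
  induction t with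
  | zero => exact .refl
  | succ t ih =>
    rw [mul_add_one] at h
    refine (ih (by omega)).tail ((pathRel_roundTrip_iff hw k).2 ⟨i + (n + k) * t, ?_, ?_, ?_⟩)
    · linarith
    · exact Prod.ext rfl (by simp only; ring)
    · exact Prod.ext rfl (by simp only; ring)

theorem modEq_two_mul_mul_succ {i j : ℕ} (h₀ : i ≡ j [MOD 2 * n])
    (h₁ : i ≡ j [MOD 2 * (n + 1)]) : i ≡ j [MOD 2 * (n * (n + 1))] := by
  rw [← (Nat.coprime_self_add_right.2 (Nat.coprime_one_right n)).lcm_eq_mul, ← Nat.lcm_mul_left,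
    ← Int.natCast_modEq_iff]
  rw [← Int.natCast_modEq_iff] at h₀ h₁
  exact Int.modEq_and_modEq_iff_modEq_lcm.1 ⟨h₀, h₁⟩

theorem msoSat_separatingSentence_iff {a b : Alph} {M : PreCBM archQQ Alph} :
    M.MsoSat (separatingSentence a b) ↔
      ∀ x, M.isEvent x → ∀ y, M.isEvent y → M.label x = some a → M.label y = some b →
        Relation.ReflTransGen (M.PathRel (roundTrip 0)) x y →
        ¬ Relation.ReflTransGen (M.PathRel (roundTrip 1)) x y :=
  GMSO.models_noCommonReach ..

theorem length_periodicWord {P : ℕ} [NeZero P] (u : Fin P → Alph) :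
    (periodicWord L u).length = L :=
  List.length_ofFn

theorem label_periodicWord {P : ℕ} [NeZero P] (u : Fin P → Alph) (p : archQQ.Procs) {i : ℕ}
    (hi : i < L) :
    (staircase n L fun _ => periodicWord L u).label (p, i + 1) =
      some (u (Fin.ofNat P (i / 2))) := by
  simp [PreCBM.label, periodicWord, hi]

/-- By the Chinese remainder theorem, events joined by round trips of both types lie a multiple
of the period of the word apart. -/
theorem msoSat_staircase_periodicWord [NeZero n] {a b : Alph} (hab : a ≠ b)
    (u : Fin (n * (n + 1)) → Alph) :
    (staircase n L fun _ => periodicWord L u).MsoSat (separatingSentence a b) := by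
  have hw (_ : archQQ.Procs) := length_periodicWord (L := L) u
  refine msoSat_separatingSentence_iff.2 fun ⟨p, i⟩ hx ⟨q, j⟩ hy hxa hyb h₀ h₁ => hab ?_
  obtain ⟨i, rfl⟩ := Nat.exists_eq_add_of_le' hx.1
  obtain ⟨j, rfl⟩ := Nat.exists_eq_add_of_le' hy.1
  have hmod : i ≡ j [MOD 2 * (n * (n + 1))] :=
    (modEq_two_mul_mul_succ (modEq_of_reflTransGen_roundTrip hw h₀)
      (modEq_of_reflTransGen_roundTrip hw h₁)).add_right_cancel' 1
  have hindex : i / 2 % (n * (n + 1)) = j / 2 % (n * (n + 1)) := by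
    rw [← Nat.mod_mul_right_div_self, ← Nat.mod_mul_right_div_self, hmod]
  have hlabel := (label_periodicWord u p ((PreCBM.isEvent_iff hw).1 hx).2).symm.trans hxa
  have hlabel' := (label_periodicWord u q ((PreCBM.isEvent_iff hw).1 hy).2).symm.trans hyb
  rw [show Fin.ofNat (n * (n + 1)) (i / 2) = Fin.ofNat _ (j / 2) from Fin.ext hindex] at hlabel
  exact Option.some.inj (hlabel.symm.trans hlabel')

theorem not_msoSat_staircase (hw : ∀ p, (w p).length = L) {a b : Alph} {i : ℕ}
    (hi : 2 * (i + n * (n + 1)) + 2 ≤ L)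
    (ha : (staircase n L w).label (false, 2 * i + 2) = some a)
    (hb : (staircase n L w).label (false, 2 * (i + n * (n + 1)) + 2) = some b) :
    ¬ (staircase n L w).MsoSat (separatingSentence a b) := by
  have h₀ := reflTransGen_roundTrip (n := n) hw 0 (n + 1) i (by linarith)
  have h₁ := reflTransGen_roundTrip (n := n) hw 1 n i (by linarith)
  rw [show 2 * i + 2 + 2 * (n + 0) * (n + 1) = 2 * (i + n * (n + 1)) + 2 by ring] at h₀
  rw [show 2 * i + 2 + 2 * (n + 1) * n = 2 * (i + n * (n + 1)) + 2 by ring] at h₁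
  exact fun h => msoSat_separatingSentence_iff.1 h _
    ((PreCBM.isEvent_iff hw).2 ⟨by simp, by simp only; omega⟩) _
    ((PreCBM.isEvent_iff hw).2 ⟨by simp, hi⟩) ha hb h₀ h₁

theorem not_msoSat_staircase_spliceWord [NeZero n] {a b : Alph} {u v : Fin (n * (n + 1)) → Alph}
    {r : Fin (n * (n + 1))} (ha : u r = a) (hb : v r = b) :
    ¬ (staircase n (4 * (n * (n + 1))) (CPDS.spliceWord (fun _ => 2 * (n * (n + 1)))
      (fun _ => periodicWord (4 * (n * (n + 1))) u)
      (fun _ => periodicWord (4 * (n * (n + 1))) v))).MsoSat (separatingSentence a b) := by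
  have hlen (u : Fin (n * (n + 1)) → Alph) := length_periodicWord (L := 4 * (n * (n + 1))) u
  have hcut : 2 * (n * (n + 1)) ≤ (periodicWord (4 * (n * (n + 1))) u).length :=
    (hlen u).symm ▸ by omega
  have hr := r.2
  refine not_msoSat_staircase (i := r)
    (fun p => (CPDS.length_spliceWord (fun _ => (hlen u).trans (hlen v).symm) p).trans (hlen v))
    (by omega) ?_ ?_
  · have hindex : Fin.ofNat (n * (n + 1)) ((2 * r + 1) / 2) = r :=
      Fin.ext ((congrArg (· % _) (by omega)).trans (Nat.mod_eq_of_lt hr))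
    have hlabel := label_periodicWord (n := n) u false
      (show 2 * (r : ℕ) + 1 < 4 * (n * (n + 1)) by omega)
    rw [hindex, ha] at hlabel
    exact (CPDS.label_spliceWord_of_le (fun _ => hcut) (by simp) (by simp only; omega)).trans hlabel
  · have hindex : Fin.ofNat (n * (n + 1)) ((2 * (r + n * (n + 1)) + 1) / 2) = r :=
      Fin.ext ((congrArg (· % _) (by omega)).trans
        ((Nat.add_mod_right _ _).trans (Nat.mod_eq_of_lt hr)))
    have hlabel := label_periodicWord (n := n) v false
      (show 2 * (r + n * (n + 1)) + 1 < 4 * (n * (n + 1)) by omega)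
    rw [hindex, hb] at hlabel
    exact (CPDS.label_spliceWord_of_lt (fun _ => hcut) (by simp only; omega)).trans hlabel

/-- Only the `n` responses in transit cross the middle of the staircase. -/
theorem exists_ne_acceptsPre_staircase_spliceWord {S : CPDS archQQ Alph} {m : ℕ}
    {ι : Type*} {w : ι → archQQ.Procs → List Alph} (hw : ∀ u p, (w u p).length = L)
    (hm : 2 * m ≤ L) (hacc : ∀ u, S.AcceptsPre (staircase n L (w u)))
    (hcard : Nat.card S.Locs ^ 2 * Nat.card S.Val ^ n < Nat.card ι) :
    ∃ u v, u ≠ v ∧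
      S.AcceptsPre (staircase n L (CPDS.spliceWord (fun _ => 2 * m) (w u) (w v))) ∧
      S.AcceptsPre (staircase n L (CPDS.spliceWord (fun _ => 2 * m) (w v) (w u))) := by
  have := S.valFintype
  have := S.valNonempty
  let crossing : Finset (archQQ.DS × archQQ.Event × archQQ.Event) :=
    (Finset.Ico (m - n) m).image fun i => (true, (true, 2 * i + 2), (false, 2 * i + 2 * n + 1))
  have hcrossing : crossing.card ≤ n := Finset.card_image_le.trans (by rw [Nat.card_Ico]; omega)
  refine CPDS.exists_ne_acceptsPre_spliceWord crossing hacc hw (fun _ => hm)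
    (fun d e f h => h.index_pos) ?_ ?_ (hcard.trans_le' ?_)
  · rintro d e f (⟨i, h⟩ | ⟨i, h⟩) hf <;> simp only at hf ⊢ <;> omega
  · rintro d e f (⟨i, h⟩ | ⟨i, h⟩) he hf
    · simp only at he hf
      omega
    · simp only at he hf
      exact Finset.mem_image.2 ⟨i, Finset.mem_Ico.2 (by omega), rfl⟩
  · have hprocs : Nat.card archQQ.Procs = 2 := Nat.card_eq_fintype_card
    rw [hprocs]
    gcongr
    exact Nat.card_pos

end Staircase

theorem exists_sq_mul_pow_lt_two_pow (l v : ℕ) :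
    ∃ n, 0 < n ∧ l ^ 2 * v ^ n < 2 ^ (n * (n + 1)) := by
  refine ⟨l + v + 1, by omega, ?_⟩
  calc l ^ 2 * v ^ (l + v + 1)
      ≤ (2 ^ l) ^ 2 * (2 ^ v) ^ (l + v + 1) := by
        gcongr <;> exact Nat.lt_two_pow_self.le
    _ = 2 ^ (l * 2 + v * (l + v + 1)) := by rw [← pow_mul, ← pow_mul, ← pow_add]
    _ < 2 ^ ((l + v + 1) * (l + v + 1 + 1)) := Nat.pow_lt_pow_right one_lt_two (by nlinarith)

theorem mso_sentence_not_cpds_definable_general {Alph : Type} [Nontrivial Alph] :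
    ∃ φ : GMSO (Alph ⊕ archQQ.Procs) (Option archQQ.DS),
      φ.Closed ∧ ∀ S : CPDS archQQ Alph, S.lang ≠ msoLang archQQ Alph φ := by
  obtain ⟨a, b, hab⟩ := exists_pair_ne Alph
  refine ⟨separatingSentence a b, GMSO.closed_noCommonReach .., fun S hS => ?_⟩
  obtain ⟨n, hn, hcard⟩ := exists_sq_mul_pow_lt_two_pow (Nat.card S.Locs) (Nat.card S.Val)
  have : NeZero n := ⟨hn.ne'⟩
  have hlang {L : ℕ} {w : archQQ.Procs → List Alph} (hw : ∀ p, (w p).length = L) :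
      S.AcceptsPre (staircase n L w) ↔ (staircase n L w).MsoSat (separatingSentence a b) :=
    Set.ext_iff.1 hS ⟨_, isCBM_staircase hw⟩
  let word (u : Fin (n * (n + 1)) → Bool) (_ : archQQ.Procs) : List Alph :=
    periodicWord (4 * (n * (n + 1))) fun r => bif u r then b else a
  have hlen (u p) : (word u p).length = 4 * (n * (n + 1)) := length_periodicWord _
  have hsat {c u v} (hacc : S.AcceptsPre (staircase n _ (CPDS.spliceWord c (word u) (word v)))) :=
    (hlang fun p => (CPDS.length_spliceWord (fun p => (hlen u p).trans (hlen v p).symm) p).trans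
      (hlen v p)).1 hacc
  obtain ⟨u, v, huv, hacc, hacc'⟩ := exists_ne_acceptsPre_staircase_spliceWord (S := S)
    (m := n * (n + 1)) hlen (by omega)
    (fun u => (hlang (hlen u)).2 (msoSat_staircase_periodicWord hab _)) (by simpa)
  obtain ⟨r, hr⟩ := Function.ne_iff.1 huv
  cases hu : u r <;> cases hv : v r
  · exact hr (hu.trans hv.symm)
  · exact not_msoSat_staircase_spliceWord (r := r) (by simp [hu]) (by simp [hv]) (hsat hacc)
  · exact not_msoSat_staircase_spliceWord (r := r) (by simp [hv]) (by simp [hu]) (hsat hacc')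
  · exact hr (hu.trans hv.symm)

/-- Over the architecture with two processes connected by two
queues (one in each direction) and a three-letter alphabet, there is an MSO
sentence whose language is the language of no CPDS. -/
theorem mso_sentence_not_cpds_definable :
    ∃ φ : GMSO (Fin 3 ⊕ archQQ.Procs) (Option archQQ.DS),
      GMSO.Closed φ ∧
      ∀ S : CPDS archQQ (Fin 3), S.lang ≠ msoLang archQQ (Fin 3) φ := by
  exact mso_sentence_not_cpds_definable_general
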